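/- Let r₁,...,r_s ∈ ℂ* be such that no r_i is a root of unity and no ratio r_i/r_j (i ≠ j) is a root of unity, let α₁,...,α_s ∈ ℂ*, let d ≥ 1, and let R₁,...,R_t be polynomials of degree at most d−1 with r'₁,...,r'_t ∈ ℂ* distinct and distinct from the r_i up to combination. Then the sequence m ↦ Σ_j α_j m^d r_j^m + Σ_k R_k(m) (r'_k)^m is a non-degenerate linear recurrence sequence whose dominant polynomial coefficients have degree exactly d, and it vanishes for at most finitely many m ∈ ℕ. -/

import Mathlib

/-!
Suppose that an exponential polynomial `m ↦ ∑ i, P i (m) * ρ i ^ m` has infinitely many zeros. Its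
finitely many coefficients lie in a countable field, which embeds in an algebraic closure of some
`ℚ_[p]` in such a way that all roots `ρ i` have norm one: a transcendence basis `B` is sent to
algebraically independent elements close to integers `a`, where `p` does not divide `G(a)` for some
`G ∈ ℤ[B]` which makes all `G * ρ i` and `G * (ρ i)⁻¹` integral over `ℤ[B]`.

For a suitable `N > 0` all `ρ i ^ N` are `p`-adically close to `1`, so on each residue class modulo
`N` the sequence is given by a Newton series whose coefficients tend to zero. By Strassmann's
argument the sequence vanishes identically on any class with infinitely many zeros. The terms with
distinct roots lie in distinct generalized eigenspaces of the shift, hence are linearly independent,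
and non-degeneracy keeps distinct roots distinct after raising them to the power `N`. So for each
root the polynomial coefficients add up to zero; here the coefficient of `r_j ^ m` has leading term
`α_j m ^ d ≠ 0`.
-/

open Polynomial Cardinal Filter Topology fwdDiff
open scoped Nat Cardinal

section ExponentialPolynomials
variable {ι K : Type*} [Field K]

/-- The family `ρ` is non-degenerate: no ratio of two distinct members is a root of unity.
Repetitions `ρ i = ρ j` with `i ≠ j` are allowed. -/
def IsNondegenerate (ρ : ι → K) : Prop :=
  ∀ ⦃i j⦄, ρ i ≠ ρ j → ¬IsOfFinOrder (ρ i / ρ j)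

/-- The exponential polynomial `m ↦ ∑ i, P i (m) * ρ i ^ m` with roots `ρ` and polynomial
coefficients `P`. -/
def expPoly [Fintype ι] (ρ : ι → K) (P : ι → K[X]) (m : ℕ) : K :=
  ∑ i, (P i).eval (m : K) * ρ i ^ m

lemma IsNondegenerate.eq_of_pow_eq {ρ : ι → K} (hρ : IsNondegenerate ρ) {i j : ι}
    (hj : ρ j ≠ 0) {n : ℕ} (hn : 0 < n) (h : ρ i ^ n = ρ j ^ n) : ρ i = ρ j := by
  by_contra hne
  refine hρ hne (isOfFinOrder_iff_pow_eq_one.2 ⟨n, hn, ?_⟩)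
  rw [div_pow, h, div_self (pow_ne_zero n hj)]

lemma isNondegenerate_comp_iff {L : Type*} [Field L] (σ : K →+* L) {ρ : ι → K} :
    IsNondegenerate (σ ∘ ρ) ↔ IsNondegenerate ρ := by
  have isOfFinOrder_map_iff (x : K) : IsOfFinOrder (σ x) ↔ IsOfFinOrder x :=
    Function.Injective.isOfFinOrder_iff (f := (σ : K →* L)) σ.injective
  simp only [IsNondegenerate, Function.comp_apply, σ.injective.ne_iff, ← map_div₀,
    isOfFinOrder_map_iff]

lemma map_expPoly [Fintype ι] {L : Type*} [Field L] (σ : K →+* L) (ρ : ι → K) (P : ι → K[X])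
    (m : ℕ) : σ (expPoly ρ P m) = expPoly (σ ∘ ρ) (fun i => (P i).map σ) m := by
  simp [expPoly, eval_natCast_map]

lemma expPoly_add_mul [Fintype ι] (ρ : ι → K) (P : ι → K[X]) (c N m : ℕ) :
    expPoly ρ P (c + N * m) =
      expPoly (fun i => ρ i ^ N) (fun i => C (ρ i ^ c) * (P i).comp (C (c : K) + C (N : K) * X))
        m := by
  refine Finset.sum_congr rfl fun i _ => ?_
  simp only [eval_mul, eval_C, eval_comp, eval_add, eval_X, pow_add, pow_mul]
  push_cast
  ring

variable (K) in
/-- The shift operator `u ↦ u (· + 1)` on sequences in `K`. -/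
abbrev seqShift : Module.End K (ℕ → K) := LinearMap.funLeft K K Nat.succ

lemma seqShift_sub_smul_pow_apply (a : K) (f : K → K) (n : ℕ) :
    ((seqShift K - a • 1) ^ n) (fun m : ℕ => f m * a ^ m) =
      a ^ n • fun m : ℕ => (Δ_[1])^[n] f m * a ^ m := by
  induction n with
  | zero => simp
  | succ n ih =>
    rw [pow_succ', Module.End.mul_apply, ih, Function.iterate_succ_apply']
    funext m
    simp [fwdDiff, LinearMap.funLeft_apply]
    ring

lemma eval_mul_pow_mem_maxGenEigenspace (a : K) (P : K[X]) :
    (fun m : ℕ => P.eval (m : K) * a ^ m) ∈ (seqShift K).maxGenEigenspace a := by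
  refine (Module.End.mem_maxGenEigenspace _ _ _).2 ⟨P.natDegree + 1, ?_⟩
  rw [seqShift_sub_smul_pow_apply a P.eval, P.fwdDiff_iter_degree_add_one_eq_zero]
  funext m
  simp

lemma eq_zero_of_forall_natCast_eval_mul_pow_eq_zero [CharZero K] {a : K} (ha : a ≠ 0) {P : K[X]}
    (h : ∀ m : ℕ, P.eval (m : K) * a ^ m = 0) : P = 0 := by
  refine P.eq_zero_of_infinite_isRoot ((Set.infinite_range_of_injective Nat.cast_injective).mono ?_)
  rintro _ ⟨m, rfl⟩
  exact (mul_eq_zero.1 (h m)).resolve_right (pow_ne_zero m ha)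

open Classical in
theorem sum_fiber_eq_zero_of_expPoly_eq_zero [Fintype ι] [CharZero K] {ρ : ι → K}
    (hρ : ∀ i, ρ i ≠ 0) {P : ι → K[X]} (h : ∀ m, expPoly ρ P m = 0) (i₀ : ι) :
    ∑ i with ρ i = ρ i₀, P i = 0 := by
  let term (u : K) (m : ℕ) : K := (∑ i with ρ i = u, P i).eval (m : K) * u ^ m
  have sum_term : ∑ u ∈ Finset.univ.image ρ, term u = 0 := by
    funext m
    rw [Finset.sum_apply, Pi.zero_apply, ← h m, expPoly,
      ← Finset.sum_fiberwise_of_maps_to fun i _ => Finset.mem_image_of_mem ρ (Finset.mem_univ i)]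
    refine Finset.sum_congr rfl fun u _ => ?_
    simp only [term, eval_finsetSum, Finset.sum_mul]
    exact Finset.sum_congr rfl fun i hi => by rw [(Finset.mem_filter.1 hi).2]
  have term_eq_zero : term (ρ i₀) = 0 :=
    (iSupIndep_iff_finsetSum_eq_zero_imp_eq_zero _).1
      (seqShift K).independent_maxGenEigenspace _ term
      (fun u _ => eval_mul_pow_mem_maxGenEigenspace u _) sum_term _
      (Finset.mem_image_of_mem ρ (Finset.mem_univ i₀))
  exact eq_zero_of_forall_natCast_eval_mul_pow_eq_zero (hρ i₀) fun m => congrFun term_eq_zero m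

open Classical in
theorem sum_fiber_eq_zero_of_expPoly_add_mul_eq_zero [Fintype ι] [CharZero K] {ρ : ι → K}
    (hρ0 : ∀ i, ρ i ≠ 0) (hρ : IsNondegenerate ρ) {P : ι → K[X]} {c N : ℕ} (hN : 0 < N)
    (h : ∀ m, expPoly ρ P (c + N * m) = 0) (i₀ : ι) : ∑ i with ρ i = ρ i₀, P i = 0 := by
  let affine : K[X] := C (c : K) + C (N : K) * X
  have pow_eq_pow_iff (i : ι) : ρ i ^ N = ρ i₀ ^ N ↔ ρ i = ρ i₀ :=
    ⟨hρ.eq_of_pow_eq (hρ0 i₀) hN, congrArg (· ^ N)⟩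
  have sum_eq_zero := sum_fiber_eq_zero_of_expPoly_eq_zero (fun i => pow_ne_zero N (hρ0 i))
    (fun m => (expPoly_add_mul ρ P c N m).symm.trans (h m)) i₀
  simp only [pow_eq_pow_iff] at sum_eq_zero
  have mul_comp_eq_zero : C (ρ i₀ ^ c) * (∑ i with ρ i = ρ i₀, P i).comp affine = 0 := by
    rw [← sum_eq_zero, Polynomial.sum_comp, Finset.mul_sum]
    exact Finset.sum_congr rfl fun i hi => by rw [(Finset.mem_filter.1 hi).2]
  have comp_eq_zero :=
    (mul_eq_zero.1 mul_comp_eq_zero).resolve_left (C_ne_zero.2 (pow_ne_zero c (hρ0 i₀)))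
  refine (comp_eq_zero_iff.1 comp_eq_zero).resolve_right fun ⟨_, affine_eq_C⟩ => ?_
  have N_eq_zero : (N : K) = 0 := by simpa [affine, coeff_C] using congrArg (coeff · 1) affine_eq_C
  exact hN.ne' (Nat.cast_eq_zero.1 N_eq_zero)

end ExponentialPolynomials

section NewtonSeries
variable {L : Type*} [Field L]

/-- The `k`-th coefficient of the Newton series `∑ k, c k * x (x - 1) ⋯ (x - k + 1)`
interpolating `g` on `ℕ`. -/
def newtonCoeff (g : ℕ → L) (k : ℕ) : L :=
  (Δ_[1])^[k] g 0 / k !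

/-- The `n`-th partial sum of the Newton series of `g`; it interpolates `g` at `0, …, n`. -/
noncomputable def newtonPoly (g : ℕ → L) (n : ℕ) : L[X] :=
  ∑ k ∈ Finset.range (n + 1), C (newtonCoeff g k) * descPochhammer L k

lemma eval_newtonPoly [CharZero L] (g : ℕ → L) {m n : ℕ} (hmn : m ≤ n) :
    (newtonPoly g n).eval (m : L) = g m := by
  have eval_term (k : ℕ) : (C (newtonCoeff g k) * descPochhammer L k).eval (m : L) =
      m.choose k • (Δ_[1])^[k] g 0 := by
    have : (k ! : L) ≠ 0 := mod_cast k.factorial_ne_zero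
    rw [eval_mul, eval_C, descPochhammer_eval_eq_descFactorial,
      Nat.descFactorial_eq_factorial_mul_choose, newtonCoeff, nsmul_eq_mul]
    push_cast
    field_simp
  have newton := shift_eq_sum_fwdDiff_iter 1 g m 0
  rw [zero_add, nsmul_one, Nat.cast_id] at newton
  rw [newton, newtonPoly, eval_finsetSum, Finset.sum_congr rfl fun k _ => eval_term k]
  refine (Finset.sum_subset (Finset.range_mono (by omega)) fun k _ hk => ?_).symm
  rw [Nat.choose_eq_zero_of_lt (by simpa using hk), zero_smul]

lemma newtonCoeff_add (f g : ℕ → L) (k : ℕ) :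
    newtonCoeff (f + g) k = newtonCoeff f k + newtonCoeff g k := by
  simp only [newtonCoeff, fwdDiff_iter_add, Pi.add_apply, add_div]

lemma newtonCoeff_smul (a : L) (g : ℕ → L) (k : ℕ) :
    newtonCoeff (a • g) k = a * newtonCoeff g k := by
  simp only [newtonCoeff, fwdDiff_iter_const_smul, Pi.smul_apply, smul_eq_mul, mul_div_assoc]

lemma newtonCoeff_pow (ρ : L) (k : ℕ) : newtonCoeff (fun m => ρ ^ m) k = (ρ - 1) ^ k / k ! := by
  have h (n : ℕ) : (Δ_[1])^[k] (fun m => ρ ^ m) n = (ρ - 1) ^ k * ρ ^ n := by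
    induction k generalizing n with
    | zero => simp
    | succ k ih => rw [Function.iterate_succ_apply', fwdDiff, ih, ih]; ring
  rw [newtonCoeff, h, pow_zero, mul_one]

lemma fwdDiff_iter_natCast_mul (g : ℕ → L) (k n : ℕ) :
    (Δ_[1])^[k + 1] (fun m : ℕ => (m : L) * g m) n =
      n * (Δ_[1])^[k + 1] g n + (k + 1) * (Δ_[1])^[k] g (n + 1) := by
  induction k generalizing n with
  | zero => simp [fwdDiff]; ring
  | succ k ih =>
    rw [Function.iterate_succ_apply', fwdDiff, ih, ih, Function.iterate_succ_apply' _ (k + 1) g,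
      fwdDiff, Function.iterate_succ_apply' _ k g, fwdDiff]
    push_cast
    ring

lemma newtonCoeff_natCast_mul_succ [CharZero L] (g : ℕ → L) (k : ℕ) :
    newtonCoeff (fun m : ℕ => (m : L) * g m) (k + 1) =
      newtonCoeff g k + ((k + 1 : ℕ) : L) * newtonCoeff g (k + 1) := by
  have hk : (k ! : L) ≠ 0 := mod_cast k.factorial_ne_zero
  have hk' : (k + 1 : L) ≠ 0 := mod_cast k.succ_ne_zero
  have h : (Δ_[1])^[k] g (0 + 1) = (Δ_[1])^[k] g 0 + (Δ_[1])^[k + 1] g 0 := by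
    rw [Function.iterate_succ_apply', fwdDiff]; ring
  rw [newtonCoeff, fwdDiff_iter_natCast_mul, h, newtonCoeff, newtonCoeff, Nat.factorial_succ]
  push_cast
  field_simp
  ring

end NewtonSeries

section Ultrametric
variable {L : Type*} [NormedField L]

variable (L) in
/-- The sequences `g : ℕ → L` whose Newton coefficients tend to zero. Over a complete
non-archimedean field of characteristic zero their Newton series converge on the closed unit ball,
so these are the restrictions to `ℕ` of certain analytic functions. -/
def newtonAnalytic : Submodule L (ℕ → L) where
  carrier := {g | Tendsto (newtonCoeff g) atTop (𝓝 0)}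
  zero_mem' := tendsto_const_nhds.congr fun k => by simpa using (newtonCoeff_smul (0 : L) 0 k).symm
  add_mem' {f g} hf hg := by
    have h := (Tendsto.add hf hg).congr fun k => (newtonCoeff_add f g k).symm
    rwa [add_zero] at h
  smul_mem' a g hg := by
    have h := (Tendsto.const_mul a hg).congr fun k => (newtonCoeff_smul a g k).symm
    rwa [mul_zero] at h

lemma mem_newtonAnalytic {g : ℕ → L} :
    g ∈ newtonAnalytic L ↔ Tendsto (newtonCoeff g) atTop (𝓝 0) :=
  Iff.rfl

variable [IsUltrametricDist L]

lemma natCast_mul_mem_newtonAnalytic [CharZero L] {g : ℕ → L} (hg : g ∈ newtonAnalytic L) :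
    (fun m : ℕ => (m : L) * g m) ∈ newtonAnalytic L := by
  rw [mem_newtonAnalytic] at hg ⊢
  refine (tendsto_add_atTop_iff_nat 1).1 ?_
  simp only [newtonCoeff_natCast_mul_succ]
  have hsucc : Tendsto (fun k => newtonCoeff g (k + 1)) atTop (𝓝 0) :=
    (tendsto_add_atTop_iff_nat 1).2 hg
  have hmul : Tendsto (fun k => ((k + 1 : ℕ) : L) * newtonCoeff g (k + 1)) atTop (𝓝 0) := by
    refine squeeze_zero_norm (fun k => ?_) (tendsto_zero_iff_norm_tendsto_zero.1 hsucc)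
    rw [norm_mul]
    exact mul_le_of_le_one_left (norm_nonneg _) (IsUltrametricDist.norm_natCast_le_one L _)
  simpa using hg.add hmul

lemma eval_mul_mem_newtonAnalytic [CharZero L] {g : ℕ → L} (hg : g ∈ newtonAnalytic L)
    (P : L[X]) : (fun m : ℕ => P.eval (m : L) * g m) ∈ newtonAnalytic L := by
  induction P using Polynomial.induction_on with
  | C a => simpa [Pi.smul_def] using (newtonAnalytic L).smul_mem a hg
  | add P Q hP hQ => simpa [add_mul, Pi.add_def] using (newtonAnalytic L).add_mem hP hQ
  | monomial n a h =>
    convert natCast_mul_mem_newtonAnalytic h using 2 with m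
    simp only [eval_mul, eval_C, eval_pow, eval_X]
    ring

lemma norm_coeff_le_of_eq_X_sub_C_mul {P Q : L[X]} {z : L} (hz : ‖z‖ ≤ 1)
    (hP : P = (X - C z) * Q) {B : ℝ} (hB : 0 ≤ B) {k : ℕ}
    (hcoeff : ∀ j > k, ‖P.coeff j‖ ≤ B) {j : ℕ} (hj : k ≤ j) : ‖Q.coeff j‖ ≤ B := by
  have coeff_eq (j : ℕ) : Q.coeff j = P.coeff (j + 1) + z * Q.coeff (j + 1) := by
    rw [hP, sub_mul, coeff_sub, coeff_X_mul, coeff_C_mul]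
    ring
  induction h : Q.natDegree + 1 - j generalizing j with
  | zero =>
    rw [coeff_eq_zero_of_natDegree_lt (by omega)]
    simpa using hB
  | succ n ih =>
    rw [coeff_eq]
    refine (IsUltrametricDist.norm_add_le_max _ _).trans
      (max_le (hcoeff _ (Nat.lt_succ_of_le hj)) ?_)
    rw [norm_mul]
    exact (mul_le_of_le_one_left (norm_nonneg _) hz).trans (ih (by omega) (by omega))

lemma norm_coeff_le_of_eq_prod_X_sub_C_mul {S : Finset L} (hS : ∀ z ∈ S, ‖z‖ ≤ 1) {P Q : L[X]}
    (hP : P = (∏ z ∈ S, (X - C z)) * Q) {B : ℝ} (hB : 0 ≤ B)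
    (hcoeff : ∀ j ≥ S.card, ‖P.coeff j‖ ≤ B) (j : ℕ) : ‖Q.coeff j‖ ≤ B := by
  classical
  induction S using Finset.induction_on generalizing P with
  | empty => simpa [hP] using hcoeff j (Nat.zero_le j)
  | insert z S hz ih =>
    rw [Finset.prod_insert hz, mul_assoc] at hP
    rw [Finset.card_insert_of_notMem hz] at hcoeff
    exact ih (fun y hy => hS y (Finset.mem_insert_of_mem hy)) rfl fun i hi =>
      norm_coeff_le_of_eq_X_sub_C_mul (hS z (Finset.mem_insert_self z S)) hP hB hcoeff hi

lemma norm_eval_le_of_norm_coeff_le {P : L[X]} {B : ℝ} (hB : 0 ≤ B) (hP : ∀ j, ‖P.coeff j‖ ≤ B)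
    {x : L} (hx : ‖x‖ ≤ 1) : ‖P.eval x‖ ≤ B := by
  rw [eval_eq_sum_range]
  refine IsUltrametricDist.norm_sum_le_of_forall_le_of_nonneg hB fun j _ => ?_
  rw [norm_mul, norm_pow]
  exact (mul_le_of_le_one_right (norm_nonneg _) (pow_le_one₀ (norm_nonneg x) hx)).trans (hP j)

lemma norm_eval_le_of_isRoot {P : L[X]} {S : Finset L} (hS : ∀ z ∈ S, ‖z‖ ≤ 1 ∧ P.IsRoot z)
    {B : ℝ} (hB : 0 ≤ B) (hP : ∀ j ≥ S.card, ‖P.coeff j‖ ≤ B) {x : L} (hx : ‖x‖ ≤ 1) :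
    ‖P.eval x‖ ≤ B := by
  obtain ⟨Q, hQ⟩ : ∏ z ∈ S, (X - C z) ∣ P :=
    Finset.prod_dvd_of_coprime
      (fun y _ z _ hyz => pairwise_coprime_X_sub_C Function.injective_id hyz)
      fun z hz => dvd_iff_isRoot.2 (hS z hz).2
  have norm_prod_le : ‖∏ z ∈ S, (x - z)‖ ≤ 1 := by
    rw [norm_prod]
    refine Finset.prod_le_one (fun _ _ => norm_nonneg _) fun z hz => ?_
    rw [sub_eq_add_neg]
    exact (IsUltrametricDist.norm_add_le_max x (-z)).trans
      (max_le hx ((norm_neg z).trans_le (hS z hz).1))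
  have norm_eval_quotient_le : ‖Q.eval x‖ ≤ B :=
    norm_eval_le_of_norm_coeff_le hB
      (norm_coeff_le_of_eq_prod_X_sub_C_mul (fun z hz => (hS z hz).1) hQ hB hP) hx
  rw [hQ, eval_mul, norm_mul, eval_prod]
  simp only [eval_sub, eval_X, eval_C]
  exact (mul_le_of_le_one_left (norm_nonneg _) norm_prod_le).trans norm_eval_quotient_le

lemma norm_coeff_descPochhammer_le_one (k j : ℕ) : ‖(descPochhammer L k).coeff j‖ ≤ 1 := by
  rw [← descPochhammer_map (Int.castRingHom L), coeff_map]
  exact IsUltrametricDist.norm_intCast_le_one L _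

lemma norm_coeff_newtonPoly_le {g : ℕ → L} {B : ℝ} (hB : 0 ≤ B) {d : ℕ}
    (hg : ∀ k ≥ d, ‖newtonCoeff g k‖ ≤ B) (n : ℕ) {j : ℕ} (hj : d ≤ j) :
    ‖(newtonPoly g n).coeff j‖ ≤ B := by
  rw [newtonPoly, finsetSum_coeff]
  refine IsUltrametricDist.norm_sum_le_of_forall_le_of_nonneg hB fun k _ => ?_
  rw [coeff_C_mul, norm_mul]
  rcases lt_or_ge k j with hkj | hjk
  · simpa [coeff_eq_zero_of_natDegree_lt ((descPochhammer_natDegree L k).trans_lt hkj)] using hB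
  · exact (mul_le_of_le_one_right (norm_nonneg _) (norm_coeff_descPochhammer_le_one k j)).trans
      (hg k (hj.trans hjk))

-- Strassmann's argument: dividing by `d` linear factors leaves a bound on all coefficients from
-- those of index at least `d`.
theorem eq_zero_of_mem_newtonAnalytic [CharZero L] {g : ℕ → L} (hg : g ∈ newtonAnalytic L)
    (hinf : {m | g m = 0}.Infinite) (m : ℕ) : g m = 0 := by
  refine norm_le_zero_iff.1 (le_of_forall_gt_imp_ge_of_dense fun ε hε => ?_)
  obtain ⟨d, hd⟩ := Metric.tendsto_atTop.1 (mem_newtonAnalytic.1 hg) ε hε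
  obtain ⟨S, hS, hcard⟩ := hinf.exists_subset_card_eq d
  rw [← eval_newtonPoly g (le_max_left m (S.sup id))]
  refine norm_eval_le_of_isRoot (S := S.map Nat.castEmbedding) ?_ hε.le ?_
    (IsUltrametricDist.norm_natCast_le_one L m)
  · simp only [Finset.mem_map, Nat.castEmbedding_apply, forall_exists_index, and_imp,
      forall_apply_eq_imp_iff₂]
    refine fun z hz => ⟨IsUltrametricDist.norm_natCast_le_one L z, ?_⟩
    have hzn : z ≤ max m (S.sup id) := le_max_of_le_right (Finset.le_sup (f := id) hz)
    exact (eval_newtonPoly g hzn).trans (hS hz)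
  · rw [Finset.card_map, hcard]
    exact fun j hj => norm_coeff_newtonPoly_le hε.le
      (fun k hk => (by simpa using hd k hk : ‖newtonCoeff g k‖ < ε).le) _ hj

end Ultrametric

lemma exists_infinite_residue_class {s : Set ℕ} (hs : s.Infinite) {n : ℕ} (hn : 0 < n) :
    ∃ c, {m | c + n * m ∈ s}.Infinite := by
  by_contra! h
  refine hs (((Set.finite_Iio n).biUnion fun c _ => (h c).image (c + n * ·)).subset fun m hm => ?_)
  exact Set.mem_biUnion (Nat.mod_lt m hn)
    ⟨m / n, by simpa [Nat.mod_add_div] using hm, Nat.mod_add_div m n⟩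

section Padic
variable {p : ℕ} [hp : Fact p.Prime] {ι L : Type*} [NormedField L] [NormedAlgebra ℚ_[p] L]

variable (p L) in
lemma inv_pow_le_norm_factorial (k : ℕ) : (p : ℝ)⁻¹ ^ k ≤ ‖(k ! : L)‖ := by
  have one_le_p : (1 : ℝ) ≤ p := mod_cast hp.out.one_lt.le
  rw [← map_natCast (algebraMap ℚ_[p] L), norm_algebraMap',
    Padic.norm_eq_zpow_neg_valuation (mod_cast k.factorial_ne_zero), Padic.valuation_natCast,
    zpow_neg, zpow_natCast, inv_pow]
  gcongr
  exact padicValNat_factorial_le p k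

lemma tendsto_pow_div_factorial_of_norm_lt_inv {x : L} (hx : ‖x‖ < (p : ℝ)⁻¹) :
    Tendsto (fun k : ℕ => x ^ k / k !) atTop (𝓝 0) := by
  have p_pos : (0 : ℝ) < p := mod_cast hp.out.pos
  have ratio_lt_one : ‖x‖ / (p : ℝ)⁻¹ < 1 := (div_lt_one (inv_pos.2 p_pos)).2 hx
  refine squeeze_zero_norm (fun k => ?_)
    (tendsto_pow_atTop_nhds_zero_of_lt_one (by positivity) ratio_lt_one)
  rw [norm_div, norm_pow, div_pow]
  gcongr
  exact inv_pow_le_norm_factorial p L k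

lemma exists_norm_pow_sub_one_lt_of_properSpace {F : Type*} [NormedField F] [ProperSpace F]
    [Finite ι] {x : ι → F} (hx : ∀ i, ‖x i‖ = 1) {ε : ℝ} (hε : 0 < ε) :
    ∃ n > 0, ∀ i, ‖x i ^ n - 1‖ < ε := by
  let y (i : ι) : Metric.sphere (0 : F) 1 := ⟨x i, mem_sphere_zero_iff_norm.2 (hx i)⟩
  have near_one : {z : ι → Metric.sphere (0 : F) 1 | ∀ i, ‖(z i : F) - 1‖ < ε} ∈ 𝓝 1 := by
    refine eventually_all.2 fun i => ?_
    have tendsto_norm : Tendsto (fun z : ι → Metric.sphere (0 : F) 1 => ‖(z i : F) - 1‖) (𝓝 1)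
        (𝓝 ‖((1 : ι → Metric.sphere (0 : F) 1) i : F) - 1‖) :=
      (by fun_prop : Continuous fun z : ι → Metric.sphere (0 : F) 1 => ‖(z i : F) - 1‖).tendsto 1
    exact tendsto_norm.eventually_lt_const (by simpa using hε)
  obtain ⟨n, hn, hpos⟩ :=
    (((mapClusterPt_one_atTop_pow y).frequently near_one).and_eventually
      (eventually_gt_atTop 0)).exists
  exact ⟨n, hpos, fun i => by simpa using hn i⟩

variable (p) in
lemma exists_norm_pow_sub_one_lt [Algebra.IsAlgebraic ℚ_[p] L] [Finite ι] {x : ι → L}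
    (hx : ∀ i, ‖x i‖ = 1) {ε : ℝ} (hε : 0 < ε) : ∃ n > 0, ∀ i, ‖x i ^ n - 1‖ < ε := by
  let F := IntermediateField.adjoin ℚ_[p] (Set.range x)
  have : FiniteDimensional ℚ_[p] F := IntermediateField.finiteDimensional_adjoin fun y _ =>
    (Algebra.IsAlgebraic.isAlgebraic y).isIntegral
  have : ProperSpace F := FiniteDimensional.proper ℚ_[p] F
  let y (i : ι) : F := ⟨x i, IntermediateField.subset_adjoin _ _ ⟨i, rfl⟩⟩
  exact exists_norm_pow_sub_one_lt_of_properSpace (x := y) hx hε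

lemma expPoly_mem_newtonAnalytic [IsUltrametricDist L] [Fintype ι] {ρ : ι → L}
    (hρ : ∀ i, ‖ρ i - 1‖ < (p : ℝ)⁻¹) (P : ι → L[X]) : expPoly ρ P ∈ newtonAnalytic L := by
  have : CharZero L := charZero_of_injective_algebraMap (algebraMap ℚ_[p] L).injective
  have pow_mem (i : ι) : (fun m : ℕ => ρ i ^ m) ∈ newtonAnalytic L := by
    simpa only [mem_newtonAnalytic, funext (newtonCoeff_pow (ρ i))] using
      tendsto_pow_div_factorial_of_norm_lt_inv (hρ i)
  convert (newtonAnalytic L).sum_mem fun i (_ : i ∈ Finset.univ) =>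
    eval_mul_mem_newtonAnalytic (pow_mem i) (P i) using 1
  funext m
  simp [expPoly]

open Classical in
theorem sum_fiber_eq_zero_of_norm_eq_one [IsUltrametricDist L] [Algebra.IsAlgebraic ℚ_[p] L]
    [Fintype ι] {ρ : ι → L} (hnorm : ∀ i, ‖ρ i‖ = 1) (hρ : IsNondegenerate ρ) {P : ι → L[X]}
    (hinf : {m | expPoly ρ P m = 0}.Infinite) (i₀ : ι) : ∑ i with ρ i = ρ i₀, P i = 0 := by
  have : CharZero L := charZero_of_injective_algebraMap (algebraMap ℚ_[p] L).injective
  have p_pos : (0 : ℝ) < p := mod_cast hp.out.pos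
  have ne_zero (i : ι) : ρ i ≠ 0 := norm_ne_zero_iff.1 (by simp [hnorm i])
  obtain ⟨N, hN, near_one⟩ := exists_norm_pow_sub_one_lt p hnorm (inv_pos.2 p_pos)
  obtain ⟨c, hc⟩ := exists_infinite_residue_class hinf hN
  refine sum_fiber_eq_zero_of_expPoly_add_mul_eq_zero ne_zero hρ hN (c := c) (fun m => ?_) i₀
  simp only [expPoly_add_mul]
  refine eq_zero_of_mem_newtonAnalytic (expPoly_mem_newtonAnalytic near_one _) ?_ m
  simpa only [Set.mem_ofPred_eq, expPoly_add_mul] using hc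

end Padic

section NormLeOne
variable {L : Type*} [NormedField L] [IsUltrametricDist L]

lemma norm_map_le_one_of_isIntegral {R K : Type*} [CommRing R] [CommRing K] [Algebra R K]
    {σ : K →+* L} (hσ : ∀ a : R, ‖σ (algebraMap R K a)‖ ≤ 1) {y : K} (hy : IsIntegral R y) :
    ‖σ y‖ ≤ 1 := by
  obtain ⟨P, monic_P, eval_P⟩ := hy
  let O := (NormedField.valuation (K := L)).integer
  let τ : R →+* O := (σ.comp (algebraMap R K)).codRestrict O hσ
  have isIntegral_σ_y : IsIntegral O (σ y) := by
    refine ⟨P.map τ, monic_P.map τ, ?_⟩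
    rw [eval₂_map, ← map_zero σ, ← eval_P, hom_eval₂]
    rfl
  exact (Valuation.integer.integers _).mem_of_integral isIntegral_σ_y

lemma norm_le_one_of_norm_sub_intCast_lt_one {x : L} {a : ℤ} (h : ‖x - a‖ < 1) : ‖x‖ ≤ 1 := by
  simpa using (IsUltrametricDist.norm_add_le_max (x - a) a).trans
    (max_le h.le (IsUltrametricDist.norm_intCast_le_one L a))

lemma norm_aeval_le_one {ι : Type*} {ξ : ι → L} (hξ : ∀ i, ‖ξ i‖ ≤ 1) (P : MvPolynomial ι ℤ) :
    ‖MvPolynomial.aeval ξ P‖ ≤ 1 := by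
  induction P using MvPolynomial.induction_on with
  | C c => simpa using IsUltrametricDist.norm_intCast_le_one L c
  | add P Q hP hQ =>
    rw [map_add]
    exact (IsUltrametricDist.norm_add_le_max _ _).trans (max_le hP hQ)
  | mul_X P i hP =>
    rw [map_mul, MvPolynomial.aeval_X, norm_mul]
    exact mul_le_one₀ hP (norm_nonneg _) (hξ i)

lemma norm_aeval_sub_aeval_lt_one {ι : Type*} {ξ η : ι → L} (hξ : ∀ i, ‖ξ i‖ ≤ 1)
    (hη : ∀ i, ‖η i‖ ≤ 1) (h : ∀ i, ‖ξ i - η i‖ < 1) (P : MvPolynomial ι ℤ) :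
    ‖MvPolynomial.aeval ξ P - MvPolynomial.aeval η P‖ < 1 := by
  induction P using MvPolynomial.induction_on with
  | C c => simp
  | add P Q hP hQ =>
    rw [map_add, map_add, add_sub_add_comm]
    exact (IsUltrametricDist.norm_add_le_max _ _).trans_lt (max_lt hP hQ)
  | mul_X P i hP =>
    have sub_eq : MvPolynomial.aeval ξ (P * .X i) - MvPolynomial.aeval η (P * .X i) =
        MvPolynomial.aeval ξ P * (ξ i - η i) +
          (MvPolynomial.aeval ξ P - MvPolynomial.aeval η P) * η i := by
      simp only [map_mul, MvPolynomial.aeval_X]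
      ring
    rw [sub_eq]
    refine (IsUltrametricDist.norm_add_le_max _ _).trans_lt (max_lt ?_ ?_) <;> rw [norm_mul]
    · exact (mul_le_of_le_one_left (norm_nonneg _) (norm_aeval_le_one hξ P)).trans_lt (h i)
    · exact (mul_le_of_le_one_right (norm_nonneg _) (hη i)).trans_lt hP

end NormLeOne

lemma exists_prime_not_dvd_eval {ι : Type*} {G : MvPolynomial ι ℤ} (hG : G ≠ 0) :
    ∃ (p : ℕ) (a : ι → ℤ), p.Prime ∧ ¬(p : ℤ) ∣ MvPolynomial.eval a G := by
  obtain ⟨a, ha⟩ : ∃ a : ι → ℤ, MvPolynomial.eval a G ≠ 0 := by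
    by_contra! h
    exact hG (MvPolynomial.funext (by simpa using h))
  obtain ⟨p, hp, prime_p⟩ := Nat.exists_infinite_primes ((MvPolynomial.eval a G).natAbs + 1)
  refine ⟨p, a, prime_p, fun hdvd => ?_⟩
  have := Nat.le_of_dvd (Int.natAbs_pos.2 ha) (Int.natCast_dvd.1 hdvd)
  omega

section PadicAlgCl
variable {p : ℕ} [hp : Fact p.Prime]

lemma norm_aeval_eq_one_of_not_dvd_eval {L : Type*} [NormedField L] [IsUltrametricDist L]
    [NormedAlgebra ℚ_[p] L] {ι : Type*} {ξ : ι → L} {a : ι → ℤ} (hξ : ∀ i, ‖ξ i - a i‖ < 1)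
    {G : MvPolynomial ι ℤ} (hG : ¬(p : ℤ) ∣ MvPolynomial.eval a G) :
    ‖MvPolynomial.aeval ξ G‖ = 1 := by
  have norm_a_le_one (i : ι) : ‖(a i : L)‖ ≤ 1 := IsUltrametricDist.norm_intCast_le_one L _
  have norm_ξ_le_one (i : ι) : ‖ξ i‖ ≤ 1 := norm_le_one_of_norm_sub_intCast_lt_one (hξ i)
  have aeval_a : MvPolynomial.aeval (fun i => (a i : L)) G = (MvPolynomial.eval a G : ℤ) :=
    (MvPolynomial.aeval_algebraMap_apply L a G).trans (by simp)
  have norm_aeval_a : ‖MvPolynomial.aeval (fun i => (a i : L)) G‖ = 1 := by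
    rw [aeval_a, ← map_intCast (algebraMap ℚ_[p] L), norm_algebraMap',
      Padic.norm_intCast_eq_one_iff, isCoprime_comm,
      (Nat.prime_iff_prime_int.1 hp.out).coprime_iff_not_dvd]
    exact hG
  have norm_sub_lt_one := norm_aeval_sub_aeval_lt_one norm_ξ_le_one norm_a_le_one hξ G
  rw [← norm_aeval_a, ← norm_neg (MvPolynomial.aeval (fun i => (a i : L)) G)]
  refine IsUltrametricDist.norm_eq_of_add_norm_lt_max ?_
  rw [← sub_eq_add_neg, norm_neg, norm_aeval_a]
  exact lt_max_of_lt_right norm_sub_lt_one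

variable (p) in
lemma exists_algebraicIndependent_padicAlgCl {ι : Type*} (hι : #ι ≤ 𝔠) :
    ∃ ξ : ι → PadicAlgCl p, AlgebraicIndependent ℤ ξ := by
  obtain ⟨T, hT⟩ := exists_isTranscendenceBasis ℤ (PadicAlgCl p)
  have continuum_le_card : 𝔠 ≤ #(PadicAlgCl p) :=
    (continuum_le_cardinal_of_nontriviallyNormedField ℚ_[p]).trans
      (mk_le_of_injective (algebraMap ℚ_[p] (PadicAlgCl p)).injective)
  have card_T : #(PadicAlgCl p) = #T := by
    simpa using IsAlgClosed.cardinal_eq_cardinal_transcendence_basis_of_aleph0_lt _ hT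
      mk_int.le (aleph0_lt_continuum.trans_le continuum_le_card)
  obtain ⟨e⟩ : Nonempty (ι ↪ T) := by
    rw [← lift_mk_le', ← card_T, lift_uzero]
    exact hι.trans (lift_continuum.symm.trans_le (lift_le.2 continuum_le_card))
  exact ⟨_, hT.1.comp e e.injective⟩

lemma exists_norm_prime_pow_mul_lt_one {L : Type*} [NormedField L] [NormedAlgebra ℚ_[p] L]
    (x : L) : ∃ k : ℕ, ‖(p : L) ^ k * x‖ < 1 := by
  have norm_p_lt_one : ‖(p : L)‖ < 1 := by
    rw [← map_natCast (algebraMap ℚ_[p] L), norm_algebraMap']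
    exact Padic.norm_p_lt_one
  have h := (tendsto_pow_atTop_nhds_zero_of_norm_lt_one norm_p_lt_one).mul_const x
  rw [zero_mul] at h
  exact ((tendsto_zero_iff_norm_tendsto_zero.1 h).eventually_lt_const one_pos).exists

lemma exists_algebraicIndependent_norm_sub_lt_one {ι : Type*} (hι : #ι ≤ 𝔠) (a : ι → ℤ) :
    ∃ ξ : ι → PadicAlgCl p, AlgebraicIndependent ℤ ξ ∧ ∀ i, ‖ξ i - a i‖ < 1 := by
  obtain ⟨ξ, hξ⟩ := exists_algebraicIndependent_padicAlgCl p hι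
  choose k hk using fun i => exists_norm_prime_pow_mul_lt_one (p := p) (ξ i)
  let f (i : ι) : ℤ[X] := C (p ^ k i : ℤ) * X + C (a i)
  have transcendental_f (i : ι) : Transcendental ℤ (f i) := by
    have hpk : (p ^ k i : ℤ) ≠ 0 := pow_ne_zero _ (mod_cast hp.out.ne_zero)
    refine (f i).transcendental ?_ ?_
    · rw [natDegree_linear hpk]; exact one_ne_zero
    · rw [leadingCoeff_linear hpk]; exact mem_nonZeroDivisors_of_ne_zero hpk
  refine ⟨_, hξ.polynomial_aeval_of_transcendental transcendental_f, fun i => ?_⟩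
  simpa [f] using hk i

end PadicAlgCl

lemma exists_ringHom_comp_algebraMap_eq {R K L : Type*} [CommRing R] [Field K] [Algebra R K]
    [Algebra.IsAlgebraic R K] [FaithfulSMul R K] [Field L] [IsAlgClosed L] (τ : R →+* L)
    (hτ : Function.Injective τ) : ∃ σ : K →+* L, σ.comp (algebraMap R K) = τ := by
  let : Algebra R L := τ.toAlgebra
  have : FaithfulSMul R L := (faithfulSMul_iff_algebraMap_injective R L).2 hτ
  have : IsDomain R := (FaithfulSMul.algebraMap_injective R K).isDomain (algebraMap R K)
  let σ : K →ₐ[R] L := IsAlgClosed.lift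
  exact ⟨σ, σ.comp_algebraMap⟩

theorem exists_padicAlgCl_embedding {K : Type*} [Field K] [CharZero K] (hK : #K ≤ 𝔠)
    (S : Finset K) :
    ∃ (p : ℕ) (_ : Fact p.Prime) (σ : K →+* PadicAlgCl p), ∀ y ∈ S, ‖σ y‖ ≤ 1 := by
  obtain ⟨B, hB⟩ := exists_isTranscendenceBasis ℤ K
  let R := Algebra.adjoin ℤ (Set.range ((↑) : B → K))
  have : Algebra.IsAlgebraic R K := hB.isAlgebraic
  let e : MvPolynomial B ℤ ≃ₐ[ℤ] R := hB.1.aevalEquiv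
  obtain ⟨g, hg, isIntegral_smul⟩ := Algebra.IsAlgebraic.exists_integral_multiples R S
  obtain ⟨p, a, prime_p, not_dvd⟩ := exists_prime_not_dvd_eval
    ((map_ne_zero_iff e.symm e.symm.injective).2 hg)
  have : Fact p.Prime := ⟨prime_p⟩
  obtain ⟨ξ, hξ, norm_sub_lt_one⟩ :=
    exists_algebraicIndependent_norm_sub_lt_one (p := p) ((mk_set_le B).trans hK) a
  let τ : R →ₐ[ℤ] PadicAlgCl p := (MvPolynomial.aeval ξ).comp e.symm
  obtain ⟨σ, hσ⟩ := exists_ringHom_comp_algebraMap_eq (K := K) (τ : R →+* PadicAlgCl p)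
    (Function.Injective.comp (g := MvPolynomial.aeval ξ) hξ e.symm.injective)
  have σ_algebraMap (z : R) : σ (algebraMap R K z) = MvPolynomial.aeval ξ (e.symm z) :=
    RingHom.congr_fun hσ z
  have norm_ξ_le_one (i : B) : ‖ξ i‖ ≤ 1 :=
    norm_le_one_of_norm_sub_intCast_lt_one (norm_sub_lt_one i)
  have norm_σ_g : ‖σ (algebraMap R K g)‖ = 1 := by
    rw [σ_algebraMap]
    exact norm_aeval_eq_one_of_not_dvd_eval norm_sub_lt_one not_dvd
  refine ⟨p, ‹_›, σ, fun y hy => ?_⟩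
  have norm_σ_smul_le_one : ‖σ (g • y)‖ ≤ 1 :=
    norm_map_le_one_of_isIntegral
      (fun z => (σ_algebraMap z).symm ▸ norm_aeval_le_one norm_ξ_le_one (e.symm z))
      (isIntegral_smul y hy)
  rwa [Algebra.smul_def, map_mul, norm_mul, norm_σ_g, one_mul] at norm_σ_smul_le_one

section SkolemMahlerLech
variable {ι κ K : Type*} [Field K]

lemma IsNondegenerate.sumElim {r : ι → K} {r' : κ → K} (hr : IsNondegenerate r)
    (hr' : IsNondegenerate r') (hmix : ∀ k i, r' k ≠ r i → ¬IsOfFinOrder (r' k / r i)) :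
    IsNondegenerate (Sum.elim r r') := by
  rintro (i | k) (j | l) hne
  · exact hr hne
  · intro h
    obtain ⟨n, hn, pow_eq_one⟩ := isOfFinOrder_iff_pow_eq_one.1 h
    refine hmix l i hne.symm (isOfFinOrder_iff_pow_eq_one.2 ⟨n, hn, ?_⟩)
    rw [← inv_div, inv_pow]
    exact inv_eq_one.2 pow_eq_one
  · exact hmix k j hne
  · exact hr' hne

lemma injective_of_pairwise_not_isOfFinOrder_div {r : ι → K} (hr0 : ∀ i, r i ≠ 0)
    (hr : Pairwise fun i j => ¬IsOfFinOrder (r i / r j)) : Function.Injective r := by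
  intro i j hij
  by_contra hne
  refine hr hne ?_
  rw [hij, div_self (hr0 j)]
  exact .one

lemma exists_countable_subfield_lifts [Finite ι] (ρ : ι → K) (P : ι → K[X]) :
    ∃ (F : Subfield K) (ρ' : ι → F) (P' : ι → F[X]), #F ≤ ℵ₀ ∧ ρ = F.subtype ∘ ρ' ∧
      P = fun i => (P' i).map F.subtype := by
  let s : Set K := Set.range ρ ∪ ⋃ i, Set.range (P i).coeff
  let F := Subfield.closure s
  have s_countable : s.Countable :=
    (Set.countable_range ρ).union (Set.countable_iUnion fun i => Set.countable_range _)
  have coeff_mem (i : ι) : P i ∈ lifts F.subtype := by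
    refine (lifts_iff_coeff_lifts _).2 fun n => ?_
    exact ⟨⟨(P i).coeff n, Subfield.subset_closure (.inr (Set.mem_iUnion.2 ⟨i, n, rfl⟩))⟩, rfl⟩
  choose P' hP' using fun i => (mem_lifts _).1 (coeff_mem i)
  refine ⟨F, fun i => ⟨ρ i, Subfield.subset_closure (.inl ⟨i, rfl⟩)⟩, P', ?_, rfl, ?_⟩
  · exact (Subfield.cardinalMk_closure_le_max s).trans (max_le s_countable.le_aleph0 le_rfl)
  · exact funext fun i => (hP' i).symm

variable [Fintype ι]

open Classical in
lemma sum_fiber_map_eq_zero_iff {L : Type*} [Field L] (σ : K →+* L) {ρ : ι → K} {P : ι → K[X]}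
    {i₀ : ι} :
    ∑ i with (σ ∘ ρ) i = (σ ∘ ρ) i₀, (P i).map σ = 0 ↔ ∑ i with ρ i = ρ i₀, P i = 0 := by
  simp only [Function.comp_apply, σ.injective.eq_iff, ← Polynomial.map_sum,
    Polynomial.map_eq_zero_iff σ.injective]

lemma expPoly_map_eq_zero_iff {L : Type*} [Field L] (σ : K →+* L) {ρ : ι → K} {P : ι → K[X]}
    {m : ℕ} : expPoly (σ ∘ ρ) (fun i => (P i).map σ) m = 0 ↔ expPoly ρ P m = 0 := by
  rw [← map_expPoly, map_eq_zero]

variable [CharZero K]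

open Classical in
lemma sum_fiber_eq_zero_of_mk_le_continuum (hK : #K ≤ 𝔠) {ρ : ι → K} (hρ0 : ∀ i, ρ i ≠ 0)
    (hρ : IsNondegenerate ρ) {P : ι → K[X]} (hinf : {m | expPoly ρ P m = 0}.Infinite) (i₀ : ι) :
    ∑ i with ρ i = ρ i₀, P i = 0 := by
  obtain ⟨p, _, σ, norm_le_one⟩ := exists_padicAlgCl_embedding hK
    (Finset.univ.image ρ ∪ Finset.univ.image fun i => (ρ i)⁻¹)
  have norm_eq_one (i : ι) : ‖(σ ∘ ρ) i‖ = 1 := by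
    have norm_inv_le_one : ‖σ (ρ i)⁻¹‖ ≤ 1 := norm_le_one _ (by simp)
    rw [map_inv₀, norm_inv, inv_le_one₀ (by simpa using hρ0 i)] at norm_inv_le_one
    exact (norm_le_one _ (by simp)).antisymm norm_inv_le_one
  refine (sum_fiber_map_eq_zero_iff σ).1 ?_
  refine sum_fiber_eq_zero_of_norm_eq_one (p := p) norm_eq_one
    ((isNondegenerate_comp_iff σ).2 hρ) ?_ i₀
  simpa only [expPoly_map_eq_zero_iff] using hinf

open Classical in
theorem skolem_mahler_lech {ρ : ι → K} (hρ0 : ∀ i, ρ i ≠ 0) (hρ : IsNondegenerate ρ)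
    {P : ι → K[X]} (hinf : {m | expPoly ρ P m = 0}.Infinite) (i₀ : ι) :
    ∑ i with ρ i = ρ i₀, P i = 0 := by
  obtain ⟨F, ρ, P, hF, rfl, rfl⟩ := exists_countable_subfield_lifts ρ P
  refine (sum_fiber_map_eq_zero_iff F.subtype).2 ?_
  refine sum_fiber_eq_zero_of_mk_le_continuum (hF.trans aleph0_le_continuum)
    (fun i => (map_ne_zero F.subtype).1 (hρ0 i)) ((isNondegenerate_comp_iff _).1 hρ) ?_ i₀
  simpa only [expPoly_map_eq_zero_iff] using hinf

theorem stmt_19_general [Fintype κ] {d : ℕ} {r α : ι → K} {r' : κ → K} {R : κ → K[X]}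
    (hr0 : ∀ i, r i ≠ 0) (hr'0 : ∀ k, r' k ≠ 0) (hα : ∃ i, α i ≠ 0)
    (hratio : Pairwise fun i j => ¬IsOfFinOrder (r i / r j)) (hr'ratio : IsNondegenerate r')
    (hmix : ∀ k i, r' k = r i ∨ ¬IsOfFinOrder (r' k / r i)) (hR : ∀ k, (R k).degree < d) :
    {m : ℕ | ∑ i, α i * (m : K) ^ d * r i ^ m + ∑ k, (R k).eval (m : K) * r' k ^ m = 0}.Finite := by
  classical
  let P : ι ⊕ κ → K[X] := Sum.elim (fun i => C (α i) * X ^ d) R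
  obtain ⟨j, hj⟩ := hα
  have r_injective := injective_of_pairwise_not_isOfFinOrder_div hr0 hratio
  have nondegenerate : IsNondegenerate (Sum.elim r r') :=
    IsNondegenerate.sumElim (fun i j hne => hratio (ne_of_apply_ne r hne)) hr'ratio
      fun k i => (hmix k i).resolve_left
  have coeff_fiber : (∑ i with Sum.elim r r' i = r j, P i).coeff d = α j := by
    rw [finsetSum_coeff, Finset.sum_eq_single_of_mem (.inl j) (by simp)]
    · simp [P]
    · rintro (i | k) hi hne
      · exact absurd (congrArg Sum.inl (r_injective (Finset.mem_filter.1 hi).2)) hne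
      · exact coeff_eq_zero_of_degree_lt (hR k)
  by_contra hinf
  have fiber_eq_zero : ∑ i with Sum.elim r r' i = r j, P i = 0 :=
    skolem_mahler_lech (Sum.forall.2 ⟨hr0, hr'0⟩) nondegenerate
      (by simpa [expPoly, P] using hinf) (.inl j)
  exact hj (by rw [← coeff_fiber, fiber_eq_zero, coeff_zero])

end SkolemMahlerLech

/-- A non-degenerate exponential polynomial
`m ↦ Σ_j α_j m^d r_j^m + Σ_k R_k(m) (r'_k)^m`, where the `r_j` are not roots
of unity, pairwise ratios of distinct roots are not roots of unity, all
`α_j ≠ 0`, and the `R_k` have degree at most `d - 1`, vanishes for at most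
finitely many `m ∈ ℕ`. -/
theorem stmt_19 (s t d : ℕ) (hs : 0 < s) (hd : 1 ≤ d)
    (r : Fin s → ℂ) (α : Fin s → ℂ) (r' : Fin t → ℂ) (R : Fin t → Polynomial ℂ)
    (hr0 : ∀ i, r i ≠ 0) (hα : ∀ i, α i ≠ 0)
    (hru : ∀ i, ¬∃ m : ℕ, 0 < m ∧ r i ^ m = 1)
    (hratio : ∀ i j, i ≠ j → ¬∃ m : ℕ, 0 < m ∧ (r i / r j) ^ m = 1)
    (hr'0 : ∀ p, r' p ≠ 0)
    (hr'distinct : ∀ p q, p ≠ q → r' p ≠ r' q)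
    (hr'ratio : ∀ p q, p ≠ q → ¬∃ m : ℕ, 0 < m ∧ (r' p / r' q) ^ m = 1)
    (hmix : ∀ p i, r' p = r i ∨ ¬∃ m : ℕ, 0 < m ∧ (r' p / r i) ^ m = 1)
    (hdeg : ∀ p, (R p).natDegree ≤ d - 1) :
    {m : ℕ | ∑ j, α j * (m : ℂ) ^ d * r j ^ m
        + ∑ p, (R p).eval (m : ℂ) * r' p ^ m = 0}.Finite := by
  simp only [← isOfFinOrder_iff_pow_eq_one] at hratio hr'ratio hmix
  exact stmt_19_general hr0 hr'0 ⟨⟨0, hs⟩, hα _⟩ hratio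
    (fun p q hne => hr'ratio p q (ne_of_apply_ne r' hne)) hmix
    fun p => degree_le_natDegree.trans_lt
      (Nat.cast_lt.2 ((hdeg p).trans_lt (Nat.sub_one_lt_of_lt hd)))
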